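/- Let Ω ⊂ ℝ² be a bounded open set with boundary of class C². Then there exists a constant C > 0, depending only on Ω, such that for every integer k ≥ 2 and every function u continuously differentiable on the closure of Ω, (∫_Ω |u(x)|^k dx)^{1/k} ≤ C·(Γ(k/2 + 1))^{1/k}·(∫_Ω u² dx + ∫_Ω |∇u|² dx)^{1/2}, where Γ denotes the Gamma function. -/

import Mathlib

open MeasureTheory Bornology

/-- `g` is a local `C²` defining function for `Ω` near the boundary point `x`. -/
def IsC2LocalDefining {N : ℕ} (Ω : Set (EuclideanSpace ℝ (Fin N)))
    (x : EuclideanSpace ℝ (Fin N)) (U : Set (EuclideanSpace ℝ (Fin N)))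
    (g : EuclideanSpace ℝ (Fin N) → ℝ) : Prop :=
  IsOpen U ∧ x ∈ U ∧ ContDiffOn ℝ 2 g U ∧ (∀ y ∈ U, gradient g y ≠ 0) ∧
    Ω ∩ U = {y ∈ U | g y < 0}

/-!
A `C²` defining function gives a uniform interior cone near each boundary point. Integrating `Du`
along the segments from `y` into the cone and averaging over the cone bounds `‖u y‖` by the
potential of `‖u‖ + ‖Du‖` against the kernel `κ z = ‖z‖ ^ (1 - d)` on the unit ball. Young's
inequality with `1 / d + 1 / r = 1 + 1 / q` bounds the `L^q` norm of this potential by `‖κ‖_r`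
times the `L^d` norm of `‖u‖ + ‖Du‖`. The growth in `q` is that of
`‖κ‖_r = (B * (q / r)) ^ (1 / r)`, where `B` is the volume of the unit ball: since
`a ^ a ≤ exp (2 * a) * Γ a` at `a = q / r = q * (1 - 1 / d) + 1`, it is at most a constant times
`Γ (q * (1 - 1 / d) + 1) ^ (1 / q)`. Compactness of the closure of the domain passes from local to
global bounds.
-/

open Set Metric Module
open scoped ENNReal NNReal Topology

section InteriorCone

lemma exists_forall_mem_ball_add_mem {E : Type*} [SeminormedAddCommGroup E] {x : E} {s : Set E}
    (hs : s ∈ 𝓝 x) :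
    ∃ r, 0 < r ∧ r ≤ 1 ∧ ∀ y ∈ ball x r, y ∈ s ∧ ∀ w ∈ ball (0 : E) r, y + w ∈ s := by
  obtain ⟨ε, hε, hεs⟩ := Metric.mem_nhds_iff.1 hs
  refine ⟨min (ε / 2) 1, by positivity, min_le_right _ _, fun y hy => ?_⟩
  have hyε : dist y x < ε / 2 := (mem_ball.1 hy).trans_le (min_le_left _ _)
  refine ⟨hεs (mem_ball.2 (by linarith)), fun w hw => hεs (mem_ball.2 ?_)⟩
  have hwε : ‖w‖ < ε / 2 := (mem_ball_zero_iff.1 hw).trans_le (min_le_left _ _)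
  calc dist (y + w) x ≤ dist (y + w) y + dist y x := dist_triangle _ _ _
    _ = ‖w‖ + dist y x := by rw [dist_self_add_left]
    _ < ε := by linarith

variable {E : Type*} [NormedAddCommGroup E] [NormedSpace ℝ E] {Ω : Set E} {x : E}

/-- The interior cone condition of `Ω` at `x`: some fixed truncated cone with vertex `0`, translated
to any point of `Ω` near `x`, stays in `Ω`. A truncated cone is encoded as a set in the unit ball
that is star-convex about `0` and has nonempty interior. -/
def HasInteriorCone (Ω : Set E) (x : E) : Prop :=
  ∃ K ⊆ ball (0 : E) 1, StarConvex ℝ 0 K ∧ (interior K).Nonempty ∧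
    ∀ᶠ y in 𝓝[Ω] x, ∀ w ∈ K, y + w ∈ Ω

lemma hasInteriorCone_of_mem_nhds (hΩ : Ω ∈ 𝓝 x) : HasInteriorCone Ω x := by
  obtain ⟨r, hr, hr1, hrΩ⟩ := exists_forall_mem_ball_add_mem hΩ
  refine ⟨ball 0 r, ball_subset_ball hr1, (convex_ball 0 r).starConvex (mem_ball_self hr), ?_, ?_⟩
  · rw [isOpen_ball.interior_eq]
    exact nonempty_ball.2 hr
  · filter_upwards [mem_nhdsWithin_of_mem_nhds (ball_mem_nhds x hr)] with y hy
    exact (hrΩ y hy).2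

lemma nonempty_interior_norm_cone_inter_ball {φ : E →L[ℝ] ℝ} {c r : ℝ} {v : E}
    (hv : c * ‖v‖ + φ v < 0) (hr : 0 < r) :
    (interior ({w | c * ‖w‖ + φ w ≤ 0} ∩ ball 0 r)).Nonempty := by
  obtain ⟨t, ht, htr⟩ := exists_pos_mul_lt hr ‖v‖
  have hopen : IsOpen ({w | c * ‖w‖ + φ w < 0} ∩ ball 0 r) :=
    (isOpen_lt (by fun_prop) continuous_const).inter isOpen_ball
  have hsub : {w | c * ‖w‖ + φ w < 0} ⊆ {w | c * ‖w‖ + φ w ≤ 0} :=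
    fun w (hw : c * ‖w‖ + φ w < 0) => hw.le
  refine ⟨t • v, interior_maximal (inter_subset_inter_left _ hsub) hopen ⟨?_, ?_⟩⟩
  · rw [mem_ofPred_eq, norm_smul_of_nonneg ht.le, map_smul, smul_eq_mul]
    linarith [mul_neg_of_pos_of_neg ht hv]
  · rwa [mem_ball_zero_iff, norm_smul_of_nonneg ht.le, mul_comm]

/- Strict differentiability makes `g (y + w) - g y` at most `φ w + c ‖w‖` uniformly in `y` near `x`,
so the cone `c ‖w‖ + φ w ≤ 0` preserves `g < 0`. -/
lemma hasInteriorCone_of_hasStrictFDerivAt {g : E → ℝ} {φ : E →L[ℝ] ℝ}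
    (hg : HasStrictFDerivAt g φ x) (hφ : φ ≠ 0) (hΩ : ∀ᶠ y in 𝓝 x, y ∈ Ω ↔ g y < 0) :
    HasInteriorCone Ω x := by
  obtain ⟨v, hv⟩ : ∃ v, φ v < 0 := by
    obtain ⟨v, hv⟩ := DFunLike.ne_iff.1 hφ
    rcases lt_or_gt_of_ne hv with h | h
    · exact ⟨v, h⟩
    · exact ⟨-v, by simpa using h⟩
  obtain ⟨c, hc, hcv⟩ := exists_pos_mul_lt (neg_pos.2 hv) ‖v‖
  have hnear : ∀ᶠ p in 𝓝 (x, x), ‖g p.1 - g p.2 - φ (p.1 - p.2)‖ ≤ c * ‖p.1 - p.2‖ :=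
    hg.isLittleO.def hc
  rw [nhds_prod_eq, Filter.eventually_prod_self_iff'] at hnear
  obtain ⟨s, hs, hgs⟩ := hnear
  obtain ⟨r, hr, hr1, hrs⟩ := exists_forall_mem_ball_add_mem (Filter.inter_mem hs hΩ)
  refine ⟨{w | c * ‖w‖ + φ w ≤ 0} ∩ ball 0 r, inter_subset_right.trans (ball_subset_ball hr1), ?_,
    nonempty_interior_norm_cone_inter_ball (by linarith : c * ‖v‖ + φ v < 0) hr, ?_⟩
  · refine (Convex.inter ?_ (convex_ball 0 r)).starConvex (by simp [hr])
    simpa using ((convexOn_univ_norm.smul hc.le).add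
      (φ.toLinearMap.convexOn convex_univ)).convex_le 0
  · filter_upwards [self_mem_nhdsWithin, mem_nhdsWithin_of_mem_nhds (ball_mem_nhds x hr)]
      with y hyΩ hy w hw
    obtain ⟨⟨hys, hy_iff⟩, hyw⟩ := hrs y hy
    obtain ⟨hyws, hyw_iff⟩ := hyw w hw.2
    have hgy : g y < 0 := hy_iff.1 hyΩ
    have hincr := (abs_le.1 (hgs (y + w) hyws y hys)).2
    have hcone : c * ‖w‖ + φ w ≤ 0 := hw.1
    rw [add_sub_cancel_left] at hincr
    exact hyw_iff.2 (by linarith)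

lemma IsC2LocalDefining.hasInteriorCone {N : ℕ} {Ω U : Set (EuclideanSpace ℝ (Fin N))}
    {x : EuclideanSpace ℝ (Fin N)} {g : EuclideanSpace ℝ (Fin N) → ℝ}
    (h : IsC2LocalDefining Ω x U g) : HasInteriorCone Ω x := by
  obtain ⟨hU, hxU, hg, hgrad, hΩU⟩ := h
  have hUx := hU.mem_nhds hxU
  have hfderiv : fderiv ℝ g x ≠ 0 := fun h0 => hgrad x hxU (by simp [gradient, h0])
  refine hasInteriorCone_of_hasStrictFDerivAt
    ((hg.contDiffAt hUx).hasStrictFDerivAt two_ne_zero) hfderiv ?_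
  filter_upwards [hUx] with y hy
  simpa [hy] using Set.ext_iff.1 hΩU y

end InteriorCone

section Young

variable {G : Type*} [AddCommGroup G] [MeasurableSpace G] [MeasurableAdd₂ G] {μ : Measure G}
  [SFinite μ] [μ.IsAddLeftInvariant] {f g : G → ℝ≥0∞} {p q r : ℝ}

lemma ennreal_rpow_mul_rpow_of_add_eq_one {a : ℝ≥0∞} {s t : ℝ} (hs : 0 ≤ s) (ht : 0 ≤ t)
    (hst : s + t = 1) : a ^ s * a ^ t = a := by
  rw [← ENNReal.rpow_add_of_nonneg _ _ hs ht, hst, ENNReal.rpow_one]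

/- Hölder for `f g = (f ^ p g ^ r) ^ (1 / q) (g ^ r) ^ (1 - 1 / p) (f ^ p) ^ (1 / p - 1 / q)`. -/
lemma lintegral_mul_le_rpow_mul_rpow_mul_rpow {α : Type*} [MeasurableSpace α] {μ : Measure α}
    {f g : α → ℝ≥0∞} (hf : Measurable f) (hg : Measurable g) (hp : 1 ≤ p) (hpq : p ≤ q)
    (hr : 0 < r) (hpqr : 1 / p + 1 / r = 1 + 1 / q) :
    ∫⁻ x, f x * g x ∂μ ≤ (∫⁻ x, f x ^ p * g x ^ r ∂μ) ^ (1 / q) *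
      ((∫⁻ x, g x ^ r ∂μ) ^ (1 - 1 / p) * (∫⁻ x, f x ^ p ∂μ) ^ (1 / p - 1 / q)) := by
  have hp0 : 0 < p := by linarith
  have hq0 : 0 < q := by linarith
  have hp' : 0 ≤ 1 - 1 / p := sub_nonneg.2 ((div_le_one hp0).2 hp)
  have hpq' : 0 ≤ 1 / p - 1 / q := sub_nonneg.2 (one_div_le_one_div_of_le hp0 hpq)
  have hfactor (x) : (f x ^ p * g x ^ r) ^ (1 / q) *
      ((g x ^ r) ^ (1 - 1 / p) * (f x ^ p) ^ (1 / p - 1 / q)) = f x * g x := by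
    have hfx : f x ^ (p * (1 / q)) * f x ^ (p * (1 / p - 1 / q)) = f x :=
      ennreal_rpow_mul_rpow_of_add_eq_one (by positivity) (by positivity) (by field_simp; ring)
    have hgx : g x ^ (r * (1 / q)) * g x ^ (r * (1 - 1 / p)) = g x :=
      ennreal_rpow_mul_rpow_of_add_eq_one (by positivity) (by positivity) <| by
        rw [← mul_add, show 1 / q + (1 - 1 / p) = 1 / r by linarith, mul_one_div_cancel hr.ne']
    rw [ENNReal.mul_rpow_of_nonneg _ _ (by positivity)]
    simp only [← ENNReal.rpow_mul]
    calc _ = (f x ^ (p * (1 / q)) * f x ^ (p * (1 / p - 1 / q))) *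
          (g x ^ (r * (1 / q)) * g x ^ (r * (1 - 1 / p))) := by ring
      _ = f x * g x := by rw [hfx, hgx]
  have hHolder := ENNReal.lintegral_prod_norm_pow_le (μ := μ) Finset.univ
    (f := ![fun x => f x ^ p * g x ^ r, fun x => g x ^ r, fun x => f x ^ p])
    (p := ![1 / q, 1 - 1 / p, 1 / p - 1 / q])
    (fun i _ => Measurable.aemeasurable (by fin_cases i <;> dsimp <;> fun_prop))
    (by simp only [Fin.sum_univ_three, Matrix.cons_val]; ring)
    (fun i _ => by fin_cases i <;> dsimp <;> positivity)
  simpa only [Fin.prod_univ_three, Matrix.cons_val, mul_assoc, hfactor] using hHolder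

lemma lintegral_lintegral_add_mul (hf : Measurable f) (hg : Measurable g) :
    ∫⁻ y, ∫⁻ z, f (y + z) * g z ∂μ ∂μ = (∫⁻ z, g z ∂μ) * ∫⁻ z, f z ∂μ := by
  rw [lintegral_lintegral_swap (by fun_prop)]
  calc ∫⁻ z, ∫⁻ y, f (y + z) * g z ∂μ ∂μ = ∫⁻ z, g z * ∫⁻ y, f y ∂μ ∂μ := by
        refine lintegral_congr fun z => ?_
        rw [lintegral_mul_const _ (by fun_prop), mul_comm, lintegral_add_right_eq_self f z]
    _ = _ := lintegral_mul_const _ hg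

theorem eLpNorm'_lintegral_add_mul_le (hf : Measurable f) (hg : Measurable g) (hp : 1 ≤ p)
    (hpq : p ≤ q) (hr : 0 < r) (hpqr : 1 / p + 1 / r = 1 + 1 / q) :
    eLpNorm' (fun y => ∫⁻ z, f (y + z) * g z ∂μ) q μ ≤ eLpNorm' g r μ * eLpNorm' f p μ := by
  have hp0 : 0 < p := by linarith
  have hq0 : 0 < q := by linarith
  have hp' : 0 ≤ 1 - 1 / p := sub_nonneg.2 ((div_le_one hp0).2 hp)
  have hpq' : 0 ≤ 1 / p - 1 / q := sub_nonneg.2 (one_div_le_one_div_of_le hp0 hpq)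
  simp only [eLpNorm'_eq_lintegral_enorm, enorm_eq_self]
  set J := ∫⁻ z, g z ^ r ∂μ
  set N := ∫⁻ z, f z ^ p ∂μ
  set H : G → ℝ≥0∞ := fun y => ∫⁻ z, f (y + z) ^ p * g z ^ r ∂μ
  set A := J ^ (1 - 1 / p) * N ^ (1 / p - 1 / q)
  have hpoint (y) : ∫⁻ z, f (y + z) * g z ∂μ ≤ H y ^ (1 / q) * A := by
    have := lintegral_mul_le_rpow_mul_rpow_mul_rpow (μ := μ) (f := fun z => f (y + z))
      (by fun_prop) hg hp hpq hr hpqr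
    rwa [lintegral_add_left_eq_self (fun z => f z ^ p) y] at this
  have hH : ∫⁻ y, H y ∂μ = J * N :=
    lintegral_lintegral_add_mul (f := fun z => f z ^ p) (g := fun z => g z ^ r)
      (by fun_prop) (by fun_prop)
  calc (∫⁻ y, (∫⁻ z, f (y + z) * g z ∂μ) ^ q ∂μ) ^ (1 / q)
      ≤ (∫⁻ y, (H y ^ (1 / q) * A) ^ q ∂μ) ^ (1 / q) := by gcongr; exact hpoint _
    _ = (∫⁻ y, H y * A ^ q ∂μ) ^ (1 / q) := by
        simp only [ENNReal.mul_rpow_of_nonneg _ _ hq0.le, ← ENNReal.rpow_mul,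
          one_div_mul_cancel hq0.ne', ENNReal.rpow_one]
    _ = (J * N) ^ (1 / q) * A := by
        rw [lintegral_mul_const _ (by fun_prop), hH, ENNReal.mul_rpow_of_nonneg _ _ (by positivity),
          ← ENNReal.rpow_mul, mul_one_div_cancel hq0.ne', ENNReal.rpow_one]
    _ = (J ^ (1 / q) * J ^ (1 - 1 / p)) * (N ^ (1 / q) * N ^ (1 / p - 1 / q)) := by
        rw [ENNReal.mul_rpow_of_nonneg _ _ (by positivity), mul_mul_mul_comm]
    _ = J ^ (1 / r) * N ^ (1 / p) := by
        rw [← ENNReal.rpow_add_of_nonneg _ _ (by positivity) hp',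
          ← ENNReal.rpow_add_of_nonneg _ _ (by positivity) hpq']
        congr 2 <;> linarith

end Young

lemma integral_Ioo_zero_one_rpow_sub_one {a : ℝ} (ha : 0 < a) :
    ∫ t in Ioo (0 : ℝ) 1, t ^ (a - 1) = 1 / a := by
  rw [← integral_Ioc_eq_integral_Ioo, ← intervalIntegral.integral_of_le zero_le_one,
    integral_rpow (.inl (by linarith)), sub_add_cancel, Real.one_rpow, Real.zero_rpow ha.ne',
    sub_zero]

lemma pow_sub_one_mul_rpow_neg {d : ℕ} (hd : d ≠ 0) {α t : ℝ} (ht : 0 < t) :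
    t ^ (d - 1) * t ^ (-α) = t ^ (d - α - 1) := by
  rw [← Real.rpow_natCast, ← Real.rpow_add ht, Nat.cast_pred (Nat.pos_of_ne_zero hd)]
  ring_nf

section Gamma

lemma rpow_mul_exp_neg_le_Gamma_add_one {s : ℝ} (hs : 0 < s) :
    s ^ s * Real.exp (-s) ≤ Real.Gamma (s + 1) := by
  have hGamma := Real.GammaIntegral_convergent (s := s + 1) (by linarith)
  rw [Real.Gamma_eq_integral (by linarith), ← integral_exp_neg_Ioi s, ← integral_const_mul]
  calc ∫ a in Ioi s, s ^ s * Real.exp (-a)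
      ≤ ∫ a in Ioi s, Real.exp (-a) * a ^ (s + 1 - 1) := by
        refine setIntegral_mono_on ((integrableOn_exp_neg_Ioi s).const_mul _)
          (hGamma.mono_set (Ioi_subset_Ioi hs.le)) measurableSet_Ioi fun a (ha : s < a) => ?_
        rw [add_sub_cancel_right, mul_comm]
        gcongr
    _ ≤ ∫ a in Ioi 0, Real.exp (-a) * a ^ (s + 1 - 1) := by
        refine setIntegral_mono_set hGamma ?_ (Ioi_subset_Ioi hs.le).eventuallyLE
        filter_upwards [ae_restrict_mem measurableSet_Ioi] with a (ha : 0 < a)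
        positivity

lemma rpow_self_le_exp_two_mul_mul_Gamma {a : ℝ} (ha : 0 < a) :
    a ^ a ≤ Real.exp (2 * a) * Real.Gamma a := by
  have haexp : a ≤ Real.exp a := (le_add_of_nonneg_right zero_le_one).trans (Real.add_one_le_exp a)
  have : 0 < Real.Gamma a := Real.Gamma_pos_of_pos ha
  have hstirling : a ^ a * Real.exp (-a) ≤ Real.exp a * Real.Gamma a :=
    (rpow_mul_exp_neg_le_Gamma_add_one ha).trans (by rw [Real.Gamma_add_one ha.ne']; gcongr)
  calc a ^ a = Real.exp a * (a ^ a * Real.exp (-a)) := by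
        rw [mul_left_comm, ← Real.exp_add, add_neg_cancel, Real.exp_zero, mul_one]
    _ ≤ Real.exp a * (Real.exp a * Real.Gamma a) :=
        mul_le_mul_of_nonneg_left hstirling (Real.exp_pos a).le
    _ = Real.exp (2 * a) * Real.Gamma a := by rw [← mul_assoc, ← Real.exp_add, two_mul]

end Gamma

section RieszKernel

variable {E : Type*} [NormedAddCommGroup E] [NormedSpace ℝ E] [FiniteDimensional ℝ E]
  [MeasurableSpace E] [BorelSpace E] {μ : Measure E} [μ.IsAddHaarMeasure]

lemma integrableOn_ball_norm_rpow_neg [Nontrivial E] {α : ℝ} (hα : α < finrank ℝ E) :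
    IntegrableOn (fun z : E => ‖z‖ ^ (-α)) (ball 0 1) μ := by
  simp only [integrableOn_fun_norm_addHaar μ (f := fun t => t ^ (-α)), smul_eq_mul]
  rw [integrableOn_congr_fun
      (fun t ht => pow_sub_one_mul_rpow_neg finrank_pos.ne' ht.1) measurableSet_Ioo,
    intervalIntegral.integrableOn_Ioo_rpow_iff one_pos]
  linarith

lemma setIntegral_ball_norm_rpow_neg [Nontrivial E] {α : ℝ} (hα : α < finrank ℝ E) :
    ∫ z in ball (0 : E) 1, ‖z‖ ^ (-α) ∂μ =
      finrank ℝ E * μ.real (ball (0 : E) 1) / (finrank ℝ E - α) := by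
  have hradial : (ball (0 : E) 1).indicator (fun z => ‖z‖ ^ (-α)) =
      fun z => (Iio 1).indicator (fun t : ℝ => t ^ (-α)) ‖z‖ := by
    ext z; simp [indicator]
  have hprofile : ∀ t ∈ Ioi (0 : ℝ), t ^ (finrank ℝ E - 1) • (Iio 1).indicator (· ^ (-α)) t =
      (Iio 1).indicator (fun t => t ^ (finrank ℝ E - α - 1)) t := fun t ht => by
    by_cases h : t ∈ Iio (1 : ℝ)
    · simp only [indicator_of_mem h, smul_eq_mul,
        pow_sub_one_mul_rpow_neg finrank_pos.ne' (mem_Ioi.1 ht)]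
    · simp only [indicator_of_notMem h, smul_zero]
  rw [← integral_indicator measurableSet_ball, hradial, integral_fun_norm_addHaar,
    setIntegral_congr_fun measurableSet_Ioi hprofile, setIntegral_indicator measurableSet_Iio,
    Ioi_inter_Iio, integral_Ioo_zero_one_rpow_sub_one (sub_pos.2 hα), nsmul_eq_mul, smul_eq_mul,
    ← mul_assoc, mul_one_div]

lemma setLIntegral_ball_enorm_rpow_neg [Nontrivial E] {α : ℝ} (hα : α < finrank ℝ E) :
    ∫⁻ z in ball (0 : E) 1, ‖z‖ₑ ^ (-α) ∂μ =
      ENNReal.ofReal (finrank ℝ E * μ.real (ball (0 : E) 1) / (finrank ℝ E - α)) := by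
  rw [← setIntegral_ball_norm_rpow_neg hα, ofReal_integral_eq_lintegral_ofReal
    (integrableOn_ball_norm_rpow_neg hα) (ae_of_all _ fun z => by positivity)]
  refine lintegral_congr_ae (ae_restrict_of_ae ?_)
  filter_upwards [Measure.ae_ne μ 0] with z hz
  rw [← ofReal_norm, ENNReal.ofReal_rpow_of_pos (norm_pos_iff.2 hz)]

/-- The Riesz kernel `‖z‖ ^ (1 - d)` of order one in dimension `d`, cut off outside the unit ball.
It takes the value `∞` at the origin when `2 ≤ d`. -/
noncomputable def truncatedRieszKernel (E : Type*) [NormedAddCommGroup E] [NormedSpace ℝ E] :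
    E → ℝ≥0∞ :=
  (ball 0 1).indicator fun z => ‖z‖ₑ ^ (1 - finrank ℝ E : ℝ)

lemma one_le_truncatedRieszKernel {E : Type*} [NormedAddCommGroup E] [NormedSpace ℝ E]
    [FiniteDimensional ℝ E] [Nontrivial E] {z : E} (hz : z ∈ ball 0 1) :
    1 ≤ truncatedRieszKernel E z := by
  have hd : (1 : ℝ) ≤ finrank ℝ E := mod_cast finrank_pos (R := ℝ) (M := E)
  have hz1 : ‖z‖ₑ ≤ 1 := by
    simpa [← ofReal_norm] using (mem_ball_zero_iff.1 hz).le
  rw [truncatedRieszKernel, indicator_of_mem hz, ← neg_sub, ENNReal.rpow_neg, ENNReal.one_le_inv]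
  exact ENNReal.rpow_le_one hz1 (sub_nonneg.2 hd)

lemma measurable_truncatedRieszKernel {E : Type*} [NormedAddCommGroup E] [NormedSpace ℝ E]
    [MeasurableSpace E] [BorelSpace E] : Measurable (truncatedRieszKernel E) :=
  (by fun_prop : Measurable fun z : E => ‖z‖ₑ ^ (1 - finrank ℝ E : ℝ)).indicator
    measurableSet_ball

lemma lintegral_truncatedRieszKernel_rpow [Nontrivial E] {q r : ℝ} (hq : 0 < q) (hr : 0 < r)
    (hqr : 1 / (finrank ℝ E : ℝ) + 1 / r = 1 + 1 / q) :
    ∫⁻ z, truncatedRieszKernel E z ^ r ∂μ = ENNReal.ofReal (μ.real (ball (0 : E) 1) * (q / r)) := by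
  have hd : (0 : ℝ) < finrank ℝ E := mod_cast finrank_pos
  have hexp : finrank ℝ E - (finrank ℝ E - 1) * r = finrank ℝ E * r / q := by
    field_simp at hqr ⊢
    linear_combination hqr
  have hindicator : (fun z => truncatedRieszKernel E z ^ r) =
      (ball 0 1).indicator fun z => ‖z‖ₑ ^ (-((finrank ℝ E - 1) * r)) := by
    ext z
    by_cases hz : z ∈ ball (0 : E) 1
    · simp only [truncatedRieszKernel, indicator_of_mem hz, ← ENNReal.rpow_mul]
      ring_nf
    · simp only [truncatedRieszKernel, indicator_of_notMem hz, ENNReal.zero_rpow_of_pos hr]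
  rw [hindicator, lintegral_indicator measurableSet_ball, setLIntegral_ball_enorm_rpow_neg, hexp]
  · congr 1
    field_simp
  · rw [← sub_pos, hexp]
    positivity

lemma eLpNorm'_truncatedRieszKernel_le [Nontrivial E] {q r : ℝ} (hq : finrank ℝ E ≤ q)
    (hr : 0 < r) (hqr : 1 / (finrank ℝ E : ℝ) + 1 / r = 1 + 1 / q) :
    eLpNorm' (truncatedRieszKernel E) r μ ≤
      ENNReal.ofReal ((μ.real (ball (0 : E) 1) + 1) * Real.exp 2) *
        ENNReal.ofReal (Real.Gamma (q / r) ^ (1 / q)) := by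
  have hd : (0 : ℝ) < finrank ℝ E := mod_cast finrank_pos
  have hq0 : 0 < q := hd.trans_le hq
  have hr1 : 1 / r ≤ 1 := by linarith [one_div_le_one_div_of_le hd hq]
  have hrq : q / r * (1 / q) = 1 / r := by field_simp
  set B := μ.real (ball (0 : E) 1)
  have hB : 0 ≤ B := measureReal_nonneg
  have hΓ : 0 ≤ Real.Gamma (q / r) := (Real.Gamma_pos_of_pos (by positivity)).le
  simp only [eLpNorm'_eq_lintegral_enorm, enorm_eq_self]
  rw [lintegral_truncatedRieszKernel_rpow hq0 hr hqr,
    ENNReal.ofReal_rpow_of_nonneg (by positivity) (by positivity),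
    ← ENNReal.ofReal_mul (by positivity)]
  refine ENNReal.ofReal_le_ofReal ?_
  calc (B * (q / r)) ^ (1 / r)
      = (B ^ (q / r) * (q / r) ^ (q / r)) ^ (1 / q) := by
        rw [← Real.mul_rpow hB (by positivity), ← Real.rpow_mul (by positivity), hrq]
    _ ≤ ((B + 1) ^ (q / r) * (Real.exp (2 * (q / r)) * Real.Gamma (q / r))) ^ (1 / q) := by
        gcongr
        · linarith
        · exact rpow_self_le_exp_two_mul_mul_Gamma (by positivity)
    _ = ((B + 1) * Real.exp 2) ^ (1 / r) * Real.Gamma (q / r) ^ (1 / q) := by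
        rw [Real.exp_mul, ← mul_assoc, ← Real.mul_rpow (by positivity) (by positivity),
          Real.mul_rpow (by positivity) hΓ, ← Real.rpow_mul (by positivity), hrq]
    _ ≤ (B + 1) * Real.exp 2 * Real.Gamma (q / r) ^ (1 / q) := by
        gcongr
        refine Real.rpow_le_self_of_one_le ?_ hr1
        nlinarith [Real.add_one_le_exp 2]

lemma exists_young_exponent {d q : ℝ} (hd : 1 ≤ d) (hq : 0 < q) :
    ∃ r, 0 < r ∧ 1 / d + 1 / r = 1 + 1 / q ∧ q / r = q * (1 - 1 / d) + 1 := by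
  have hd1 : 1 / d ≤ 1 := (div_le_one (by linarith)).2 hd
  have hq' : 0 < 1 / q := by positivity
  refine ⟨(1 + 1 / q - 1 / d)⁻¹, inv_pos.2 (by linarith), ?_, ?_⟩
  · rw [one_div (_⁻¹), inv_inv]
    ring
  · rw [div_inv_eq_mul]
    field_simp
    ring

theorem eLpNorm'_lintegral_truncatedRieszKernel_le [Nontrivial E] {f : E → ℝ≥0∞}
    (hf : Measurable f) {q : ℝ} (hq : finrank ℝ E ≤ q) :
    eLpNorm' (fun y => ∫⁻ z, f (y + z) * truncatedRieszKernel E z ∂μ) q μ ≤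
      ENNReal.ofReal ((μ.real (ball (0 : E) 1) + 1) * Real.exp 2) *
        ENNReal.ofReal (Real.Gamma (q * (1 - 1 / finrank ℝ E) + 1) ^ (1 / q)) *
          eLpNorm' f (finrank ℝ E) μ := by
  have hd : (1 : ℝ) ≤ finrank ℝ E := mod_cast finrank_pos (R := ℝ) (M := E)
  obtain ⟨r, hr, hqr, hdiv⟩ := exists_young_exponent hd (by linarith : 0 < q)
  refine (eLpNorm'_lintegral_add_mul_le hf measurable_truncatedRieszKernel hd hq hr hqr).trans ?_
  rw [← hdiv]
  gcongr
  exact eLpNorm'_truncatedRieszKernel_le hq hr hqr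

lemma setLIntegral_Ioi_rpow_neg_add_one_le {s a : ℝ} (hs : 1 ≤ s) (ha : 0 ≤ a) :
    ∫⁻ t in Ioi a, ENNReal.ofReal (t ^ (-(s + 1))) ≤ ENNReal.ofReal a ^ (-s) := by
  rcases ha.eq_or_lt with rfl | ha
  · simp [ENNReal.zero_rpow_of_neg (show -s < 0 by linarith)]
  have hs' : -(s + 1) < -1 := by linarith
  rw [← ofReal_integral_eq_lintegral_ofReal (integrableOn_Ioi_rpow_of_lt hs' ha),
    integral_Ioi_rpow_of_lt hs' ha, ENNReal.ofReal_rpow_of_pos ha]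
  · refine ENNReal.ofReal_le_ofReal ?_
    rw [show -(s + 1) + 1 = -s by ring, neg_div_neg_eq]
    exact div_le_self (by positivity) hs
  · filter_upwards [ae_restrict_mem measurableSet_Ioi] with t (ht : a < t)
    have := ha.trans ht
    positivity

lemma lintegral_comp_smul_of_pos {f : E → ℝ≥0∞} (hf : Measurable f) {t : ℝ} (ht : 0 < t) :
    ∫⁻ w, f (t • w) ∂μ = ENNReal.ofReal (t ^ (-finrank ℝ E : ℝ)) * ∫⁻ z, f z ∂μ := by
  rw [← lintegral_map hf (measurable_const_smul t), Measure.map_addHaar_smul μ ht.ne',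
    lintegral_smul_measure, abs_of_nonneg (by positivity), Real.rpow_neg ht.le, Real.rpow_natCast,
    smul_eq_mul]

lemma setLIntegral_unitBall_enorm_mul_comp_smul {f : E → ℝ≥0∞} (hf : Measurable f) {t : ℝ}
    (ht : 0 < t) :
    ∫⁻ w in ball (0 : E) 1, ‖w‖ₑ * f (t • w) ∂μ =
      ENNReal.ofReal (t ^ (-(finrank ℝ E + 1) : ℝ)) * ∫⁻ z in ball (0 : E) t, ‖z‖ₑ * f z ∂μ := by
  have hrescale : (ball (0 : E) 1).indicator (fun w => ‖w‖ₑ * f (t • w)) = fun w =>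
      ENNReal.ofReal t⁻¹ * (ball (0 : E) t).indicator (fun z => ‖z‖ₑ * f z) (t • w) := by
    ext w
    have hmem : t • w ∈ ball (0 : E) t ↔ w ∈ ball (0 : E) 1 := by
      simp [norm_smul_of_nonneg ht.le, ht]
    by_cases hw : w ∈ ball (0 : E) 1
    · rw [indicator_of_mem hw, indicator_of_mem (hmem.2 hw), enorm_smul, ← mul_assoc, ← mul_assoc,
        Real.enorm_of_nonneg ht.le, ← ENNReal.ofReal_mul (by positivity), inv_mul_cancel₀ ht.ne',
        ENNReal.ofReal_one, one_mul]
    · rw [indicator_of_notMem hw, indicator_of_notMem (mt hmem.1 hw), mul_zero]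
  have hmeas : Measurable ((ball (0 : E) t).indicator fun z => ‖z‖ₑ * f z) :=
    (by fun_prop : Measurable fun z : E => ‖z‖ₑ * f z).indicator measurableSet_ball
  rw [← lintegral_indicator measurableSet_ball, hrescale, lintegral_const_mul _ (by fun_prop),
    lintegral_comp_smul_of_pos hmeas ht, lintegral_indicator measurableSet_ball, ← mul_assoc,
    ← ENNReal.ofReal_mul (by positivity), ← Real.rpow_neg_one, ← Real.rpow_add ht]
  ring_nf

lemma setLIntegral_rpow_mul_enorm_le_truncatedRieszKernel {E : Type*} [NormedAddCommGroup E]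
    [NormedSpace ℝ E] [FiniteDimensional ℝ E] [Nontrivial E] (z : E) :
    ∫⁻ t in Ioi ‖z‖ ∩ Ioc 0 1, ENNReal.ofReal (t ^ (-(finrank ℝ E + 1) : ℝ)) * ‖z‖ₑ ≤
      truncatedRieszKernel E z := by
  by_cases hz : z ∈ ball (0 : E) 1
  · rw [truncatedRieszKernel, indicator_of_mem hz]
    have hd : (1 : ℝ) ≤ finrank ℝ E := mod_cast finrank_pos (R := ℝ) (M := E)
    rcases eq_or_ne z 0 with rfl | hz0
    · simp
    calc _ ≤ ∫⁻ t in Ioi ‖z‖, ENNReal.ofReal (t ^ (-(finrank ℝ E + 1) : ℝ)) * ‖z‖ₑ :=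
          lintegral_mono_set inter_subset_left
      _ ≤ ‖z‖ₑ ^ (-finrank ℝ E : ℝ) * ‖z‖ₑ := by
          rw [lintegral_mul_const _ (by fun_prop), ← ofReal_norm]
          gcongr
          exact setLIntegral_Ioi_rpow_neg_add_one_le hd (norm_nonneg z)
      _ = ‖z‖ₑ ^ (1 - finrank ℝ E : ℝ) := by
          rw [sub_eq_neg_add, ENNReal.rpow_add _ _ (by simpa using hz0) enorm_ne_top,
            ENNReal.rpow_one]
  · have hempty : Ioi ‖z‖ ∩ Ioc 0 1 = ∅ := by
      ext t
      simp only [mem_ball_zero_iff, not_lt] at hz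
      simpa using fun ht _ => hz.trans_lt ht
    rw [hempty, Measure.restrict_empty, lintegral_zero_measure]
    exact zero_le

/- After substituting `z = t • w`, each `z` collects the weight `‖z‖ ∫ t ^ (-(d + 1)) dt` over
`t > ‖z‖`, which is at most `‖z‖ ^ (1 - d)`. -/
lemma setLIntegral_unitBall_setLIntegral_comp_smul_le [Nontrivial E] {f : E → ℝ≥0∞}
    (hf : Measurable f) :
    ∫⁻ w in ball (0 : E) 1, (∫⁻ t in Ioc (0 : ℝ) 1, ‖w‖ₑ * f (t • w)) ∂μ ≤
      ∫⁻ z, f z * truncatedRieszKernel E z ∂μ := by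
  set ω : ℝ → ℝ≥0∞ := fun t => ENNReal.ofReal (t ^ (-(finrank ℝ E + 1) : ℝ))
  have hlt : MeasurableSet {p : ℝ × E | ‖p.2‖ < p.1} := measurableSet_lt (by fun_prop) (by fun_prop)
  have hmeas : Measurable fun p : ℝ × E =>
      {p : ℝ × E | ‖p.2‖ < p.1}.indicator (fun p => f p.2 * (ω p.1 * ‖p.2‖ₑ)) p :=
    (by fun_prop : Measurable fun p : ℝ × E => f p.2 * (ω p.1 * ‖p.2‖ₑ)).indicator hlt
  calc ∫⁻ w in ball (0 : E) 1, (∫⁻ t in Ioc (0 : ℝ) 1, ‖w‖ₑ * f (t • w)) ∂μ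
      = ∫⁻ t in Ioc (0 : ℝ) 1, ∫⁻ w in ball (0 : E) 1, ‖w‖ₑ * f (t • w) ∂μ :=
        lintegral_lintegral_swap (by fun_prop)
    _ = ∫⁻ t in Ioc (0 : ℝ) 1, ∫⁻ z,
          {p : ℝ × E | ‖p.2‖ < p.1}.indicator (fun p => f p.2 * (ω p.1 * ‖p.2‖ₑ)) (t, z) ∂μ := by
        refine setLIntegral_congr_fun measurableSet_Ioc fun t ht => ?_
        rw [setLIntegral_unitBall_enorm_mul_comp_smul hf ht.1,
          ← lintegral_const_mul _ (by fun_prop), ← lintegral_indicator measurableSet_ball]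
        refine lintegral_congr fun z => ?_
        simp only [indicator, mem_ball_zero_iff, mem_ofPred_eq]
        split_ifs <;> ring
    _ = ∫⁻ z, (∫⁻ t in Ioc (0 : ℝ) 1,
          {p : ℝ × E | ‖p.2‖ < p.1}.indicator (fun p => f p.2 * (ω p.1 * ‖p.2‖ₑ)) (t, z)) ∂μ :=
        lintegral_lintegral_swap hmeas.aemeasurable
    _ = ∫⁻ z, f z * (∫⁻ t in Ioi ‖z‖ ∩ Ioc 0 1, ω t * ‖z‖ₑ) ∂μ := by
        refine lintegral_congr fun z => ?_
        rw [← lintegral_const_mul _ (by fun_prop), ← setLIntegral_indicator measurableSet_Ioi]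
        rfl
    _ ≤ ∫⁻ z, f z * truncatedRieszKernel E z ∂μ := by
        gcongr with z
        exact setLIntegral_rpow_mul_enorm_le_truncatedRieszKernel z

end RieszKernel

section PotentialBound

variable {E F : Type*} [NormedAddCommGroup E] [NormedSpace ℝ E] [NormedAddCommGroup F]
  [NormedSpace ℝ F] {Ω : Set E} {u : E → F}

lemma enorm_le_enorm_add_setLIntegral_enorm_fderiv [CompleteSpace F] (hΩ : IsOpen Ω)
    (hu : ContDiffOn ℝ 1 u Ω) {y w : E} (hseg : ∀ t ∈ Icc (0 : ℝ) 1, y + t • w ∈ Ω) :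
    ‖u y‖ₑ ≤ ‖u (y + w)‖ₑ + ∫⁻ t in Ioc (0 : ℝ) 1, ‖w‖ₑ * ‖fderiv ℝ u (y + t • w)‖ₑ := by
  have hderiv : ∀ t ∈ uIcc (0 : ℝ) 1,
      HasDerivAt (fun t : ℝ => u (y + t • w)) (fderiv ℝ u (y + t • w) w) t := by
    intro t ht
    rw [uIcc_of_le zero_le_one] at ht
    have hu' := ((hu.differentiableOn one_ne_zero).differentiableAt
      (hΩ.mem_nhds (hseg t ht))).hasFDerivAt
    exact hu'.comp_hasDerivAt t (by simpa using ((hasDerivAt_id t).smul_const w).const_add y)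
  have hcont : ContinuousOn (fun t : ℝ => fderiv ℝ u (y + t • w) w) (uIcc (0 : ℝ) 1) := by
    rw [uIcc_of_le zero_le_one]
    exact ((hu.continuousOn_fderiv_of_isOpen hΩ le_rfl).comp (by fun_prop) hseg).clm_apply
      continuousOn_const
  have hFTC : u y = u (y + w) - ∫ t in Ioc (0 : ℝ) 1, fderiv ℝ u (y + t • w) w := by
    rw [← intervalIntegral.integral_of_le zero_le_one,
      intervalIntegral.integral_eq_sub_of_hasDerivAt hderiv hcont.intervalIntegrable]
    simp
  calc ‖u y‖ₑ ≤ ‖u (y + w)‖ₑ + ‖∫ t in Ioc (0 : ℝ) 1, fderiv ℝ u (y + t • w) w‖ₑ :=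
        hFTC ▸ enorm_sub_le
    _ ≤ ‖u (y + w)‖ₑ + ∫⁻ t in Ioc (0 : ℝ) 1, ‖w‖ₑ * ‖fderiv ℝ u (y + t • w)‖ₑ := by
        gcongr
        refine (enorm_integral_le_lintegral_enorm _).trans (lintegral_mono fun t => ?_)
        rw [mul_comm]
        exact ContinuousLinearMap.le_opENorm _ _

/-- The density `‖u‖ + ‖Du‖` of the first-order Sobolev norm of `u` on `Ω`, extended by zero. -/
noncomputable def sobolevDensity (Ω : Set E) (u : E → F) : E → ℝ≥0∞ :=
  Ω.indicator fun x => ‖u x‖ₑ + ‖fderiv ℝ u x‖ₑ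

lemma measurable_sobolevDensity [MeasurableSpace E] [BorelSpace E] (hΩ : IsOpen Ω)
    (hu : ContDiffOn ℝ 1 u Ω) : Measurable (sobolevDensity Ω u) := by
  classical
  rw [sobolevDensity, ← piecewise_eq_indicator]
  exact (hu.continuousOn.enorm.add (hu.continuousOn_fderiv_of_isOpen hΩ le_rfl).enorm)
    |>.measurable_piecewise continuousOn_const hΩ.measurableSet

lemma enorm_le_sobolevDensity_add_setLIntegral [CompleteSpace F] (hΩ : IsOpen Ω)
    (hu : ContDiffOn ℝ 1 u Ω) {y w : E} (hseg : ∀ t ∈ Icc (0 : ℝ) 1, y + t • w ∈ Ω) :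
    ‖u y‖ₑ ≤ sobolevDensity Ω u (y + w) +
      ∫⁻ t in Ioc (0 : ℝ) 1, ‖w‖ₑ * sobolevDensity Ω u (y + t • w) := by
  refine (enorm_le_enorm_add_setLIntegral_enorm_fderiv hΩ hu hseg).trans (add_le_add ?_ ?_)
  · rw [sobolevDensity, indicator_of_mem (by simpa using hseg 1 (by simp))]
    exact le_self_add
  · refine setLIntegral_mono' measurableSet_Ioc fun t ht => ?_
    rw [sobolevDensity, indicator_of_mem (hseg t (Ioc_subset_Icc_self ht))]
    gcongr
    exact le_add_self

variable [FiniteDimensional ℝ E] [MeasurableSpace E] [BorelSpace E] {μ : Measure E}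
  [μ.IsAddHaarMeasure]

lemma measure_interior_mul_enorm_le_lintegral_truncatedRieszKernel [Nontrivial E] [CompleteSpace F]
    (hΩ : IsOpen Ω) (hu : ContDiffOn ℝ 1 u Ω) {K : Set E} (hK : K ⊆ ball 0 1)
    (hK0 : StarConvex ℝ 0 K) {y : E} (hyK : ∀ w ∈ K, y + w ∈ Ω) :
    μ (interior K) * ‖u y‖ₑ ≤
      2 * ∫⁻ z, sobolevDensity Ω u (y + z) * truncatedRieszKernel E z ∂μ := by
  have hf : Measurable fun z => sobolevDensity Ω u (y + z) :=
    (measurable_sobolevDensity hΩ hu).comp (measurable_const_add y)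
  have hseg : ∀ w ∈ K, ∀ t ∈ Icc (0 : ℝ) 1, y + t • w ∈ Ω := fun _ hw t ht =>
    hyK _ (hK0.smul_mem hw ht.1 ht.2)
  calc μ (interior K) * ‖u y‖ₑ = ∫⁻ _ in interior K, ‖u y‖ₑ ∂μ := by
        rw [setLIntegral_const, mul_comm]
    _ ≤ ∫⁻ w in interior K, (sobolevDensity Ω u (y + w) +
          ∫⁻ t in Ioc (0 : ℝ) 1, ‖w‖ₑ * sobolevDensity Ω u (y + t • w)) ∂μ :=
        setLIntegral_mono' isOpen_interior.measurableSet fun w hw =>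
          enorm_le_sobolevDensity_add_setLIntegral hΩ hu (hseg w (interior_subset hw))
    _ ≤ ∫⁻ w in ball 0 1, (sobolevDensity Ω u (y + w) +
          ∫⁻ t in Ioc (0 : ℝ) 1, ‖w‖ₑ * sobolevDensity Ω u (y + t • w)) ∂μ :=
        lintegral_mono_set (interior_subset.trans hK)
    _ = ∫⁻ w in ball 0 1, sobolevDensity Ω u (y + w) ∂μ + ∫⁻ w in ball 0 1,
          (∫⁻ t in Ioc (0 : ℝ) 1, ‖w‖ₑ * sobolevDensity Ω u (y + t • w)) ∂μ :=
        lintegral_add_left hf _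
    _ ≤ 2 * ∫⁻ z, sobolevDensity Ω u (y + z) * truncatedRieszKernel E z ∂μ := by
        rw [two_mul]
        refine add_le_add ?_ (setLIntegral_unitBall_setLIntegral_comp_smul_le hf)
        exact (setLIntegral_mono' measurableSet_ball fun z hz =>
          le_mul_of_one_le_right' (one_le_truncatedRieszKernel hz)).trans
            (setLIntegral_le_lintegral _ _)

theorem HasInteriorCone.exists_eLpNorm'_le [Nontrivial E] [CompleteSpace F] {x : E} (hΩ : IsOpen Ω)
    (hx : HasInteriorCone Ω x) :
    ∃ t ∈ 𝓝 x, ∃ C : ℝ≥0, ∀ (q : ℝ) (u : E → F), finrank ℝ E ≤ q → ContDiffOn ℝ 1 u Ω →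
      eLpNorm' u q (μ.restrict (t ∩ Ω)) ≤ C *
        ENNReal.ofReal (Real.Gamma (q * (1 - 1 / finrank ℝ E) + 1) ^ (1 / q)) *
          eLpNorm' (sobolevDensity Ω u) (finrank ℝ E) μ := by
  obtain ⟨K, hK, hK0, hKne, hnear⟩ := hx
  obtain ⟨t, ht, hxt, htK⟩ := mem_nhdsWithin.1 hnear
  have hK_pos : μ (interior K) ≠ 0 := (isOpen_interior.measure_pos μ hKne).ne'
  have hK_fin : μ (interior K) ≠ ∞ :=
    ((measure_mono (interior_subset.trans hK)).trans_lt measure_ball_lt_top).ne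
  set c := ((μ (interior K))⁻¹ * 2).toNNReal
  have hc : (c : ℝ≥0∞) = (μ (interior K))⁻¹ * 2 := ENNReal.coe_toNNReal (by finiteness)
  refine ⟨t, ht.mem_nhds hxt, c * ((μ.real (ball (0 : E) 1) + 1) * Real.exp 2).toNNReal,
    fun q u hq hu => ?_⟩
  have hq0 : 0 < q := (Nat.cast_pos.2 finrank_pos).trans_le hq
  set P := fun y => ∫⁻ z, sobolevDensity Ω u (y + z) * truncatedRieszKernel E z ∂μ
  have hpoint : ∀ᵐ y ∂μ.restrict (t ∩ Ω), ‖u y‖ₑ ≤ c * ‖P y‖ₑ := by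
    refine ae_restrict_of_forall_mem (ht.inter hΩ).measurableSet fun y hy => ?_
    rw [hc, mul_assoc, enorm_eq_self, ← ENNReal.mul_le_iff_le_inv hK_pos hK_fin]
    exact measure_interior_mul_enorm_le_lintegral_truncatedRieszKernel hΩ hu hK hK0 (htK hy)
  calc eLpNorm' u q (μ.restrict (t ∩ Ω))
      ≤ c * eLpNorm' P q (μ.restrict (t ∩ Ω)) :=
        eLpNorm'_le_nnreal_smul_eLpNorm'_of_ae_le_mul' hpoint hq0
    _ ≤ c * eLpNorm' P q μ :=
        mul_le_mul_right (eLpNorm'_mono_measure P Measure.restrict_le_self hq0.le) _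
    _ ≤ _ := by
        rw [ENNReal.coe_mul, mul_assoc, mul_assoc, ← mul_assoc (ENNReal.ofNNReal (Real.toNNReal _))]
        refine mul_le_mul_right ?_ _
        exact eLpNorm'_lintegral_truncatedRieszKernel_le (measurable_sobolevDensity hΩ hu) hq

end PotentialBound

section IntegralForm

variable {X F G : Type*} [MeasurableSpace X] {μ : Measure X} [NormedAddCommGroup F]
  [NormedAddCommGroup G]

lemma eLpNorm_ofReal_eq_eLpNorm' {f : X → F} {p : ℝ} (hp : 0 < p) :
    eLpNorm f (ENNReal.ofReal p) μ = eLpNorm' f p μ := by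
  rw [eLpNorm_eq_eLpNorm' (by simpa using hp) ENNReal.ofReal_ne_top, ENNReal.toReal_ofReal hp.le]

lemma eLpNorm'_eq_ofReal_integral_rpow {f : X → F} {p : ℝ} (hp : 0 < p)
    (hf : MemLp f (ENNReal.ofReal p) μ) :
    eLpNorm' f p μ = ENNReal.ofReal ((∫ x, ‖f x‖ ^ p ∂μ) ^ (1 / p)) := by
  rw [← eLpNorm_ofReal_eq_eLpNorm' hp,
    hf.eLpNorm_eq_integral_rpow_norm (by simpa using hp) ENNReal.ofReal_ne_top,
    ENNReal.toReal_ofReal hp.le, one_div]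

lemma eLpNorm'_add_eLpNorm'_le_ofReal {f : X → F} {g : X → G} {n : ℕ} (hn : n ≠ 0)
    (hf : MemLp f n μ) (hg : MemLp g n μ) :
    eLpNorm' f n μ + eLpNorm' g n μ ≤
      ENNReal.ofReal (2 * ((∫ x, ‖f x‖ ^ n ∂μ) + ∫ x, ‖g x‖ ^ n ∂μ) ^ (1 / n : ℝ)) := by
  have hn0 : (0 : ℝ) < n := by positivity
  rw [← ENNReal.ofReal_natCast] at hf hg
  rw [eLpNorm'_eq_ofReal_integral_rpow hn0 hf, eLpNorm'_eq_ofReal_integral_rpow hn0 hg,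
    ← ENNReal.ofReal_add (by positivity) (by positivity), two_mul]
  simp only [Real.rpow_natCast]
  have hf0 : 0 ≤ ∫ x, ‖f x‖ ^ n ∂μ := by positivity
  have hg0 : 0 ≤ ∫ x, ‖g x‖ ^ n ∂μ := by positivity
  gcongr <;> linarith

end IntegralForm

section BoundaryRegularity

lemma isBounded_image_of_forall_tendsto {X Y : Type*} [TopologicalSpace X] [PseudoMetricSpace Y]
    {f : X → Y} {s : Set X} (hs : IsCompact (closure s))
    (hf : ∀ x ∈ closure s, ∃ y, Filter.Tendsto f (𝓝[s] x) (𝓝 y)) : IsBounded (f '' s) := by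
  have : IsBounded (f '' (s ∩ closure s)) := by
    refine hs.induction_on (p := fun t => IsBounded (f '' (s ∩ t))) (by simp) ?_ ?_ ?_
    · exact fun t t' htt' h => h.subset (image_mono (inter_subset_inter_right s htt'))
    · intro t t' h h'
      rw [inter_union_distrib_left, image_union]
      exact h.union h'
    · intro x hx
      obtain ⟨y, hy⟩ := hf x hx
      obtain ⟨t, ht, hbdd⟩ := Metric.exists_isBounded_image_of_tendsto hy
      obtain ⟨U, hU, hUt⟩ := mem_nhdsWithin_iff_exists_mem_nhds_inter.1 ht
      exact ⟨U, mem_nhdsWithin_of_mem_nhds hU,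
        hbdd.subset (image_mono (by rwa [inter_comm]))⟩
  rwa [inter_eq_left.2 subset_closure] at this

lemma memLp_restrict_of_forall_tendsto {X Y : Type*} [PseudoMetricSpace X] [ProperSpace X]
    [MeasurableSpace X] [OpensMeasurableSpace X] {μ : Measure X} [IsFiniteMeasureOnCompacts μ]
    [NormedAddCommGroup Y] [SecondCountableTopologyEither X Y] {s : Set X} {f : X → Y}
    (hs : IsBounded s) (hs_meas : MeasurableSet s) (hf : ContinuousOn f s)
    (hf_lim : ∀ x ∈ closure s, ∃ y, Filter.Tendsto f (𝓝[s] x) (𝓝 y)) (p : ℝ≥0∞) :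
    MemLp f p (μ.restrict s) := by
  have : IsFiniteMeasure (μ.restrict s) := ⟨by simpa using hs.measure_lt_top⟩
  obtain ⟨M, hM⟩ := isBounded_iff_forall_norm_le.1
    (isBounded_image_of_forall_tendsto hs.isCompact_closure hf_lim)
  exact MemLp.of_bound (hf.aestronglyMeasurable hs_meas) M
    (ae_restrict_of_forall_mem hs_meas fun x hx => hM _ (mem_image_of_mem f hx))

variable {E F : Type*} [NormedAddCommGroup E] [NormedSpace ℝ E] [NormedAddCommGroup F]
  [NormedSpace ℝ F] {Ω : Set E} {u : E → F}

lemma exists_tendsto_fderiv_of_contDiffWithinAt_closure (hΩ : IsOpen Ω) {x : E}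
    (hx : x ∈ closure Ω) (hu : ContDiffWithinAt ℝ 1 u (closure Ω) x) :
    ∃ L, Filter.Tendsto (fderiv ℝ u) (𝓝[Ω] x) (𝓝 L) := by
  obtain ⟨V, hV, -, u', hu', hu'_cont⟩ :=
    (contDiffWithinAt_succ_iff_hasFDerivWithinAt (n := 0) (by simp)).1 (by simpa using hu)
  rw [insert_eq_of_mem hx] at hV
  have hΩV : 𝓝[Ω] x ≤ 𝓝[V] x := (nhdsWithin_mono x subset_closure).trans (nhdsWithin_le_of_mem hV)
  refine ⟨u' x, (hu'_cont.continuousWithinAt.tendsto.mono_left hΩV).congr' ?_⟩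
  have hV_near : ∀ᶠ z in 𝓝[Ω] x, V ∈ 𝓝[Ω] z :=
    eventually_eventually_nhdsWithin.2 (hΩV self_mem_nhdsWithin)
  filter_upwards [hV_near, self_mem_nhdsWithin] with z hz hzΩ
  rw [hΩ.nhdsWithin_eq hzΩ] at hz
  exact (((hu' z (mem_of_mem_nhds hz)).hasFDerivAt hz).fderiv).symm

lemma memLp_and_memLp_fderiv_of_contDiffOn_closure [ProperSpace E] [MeasurableSpace E]
    [BorelSpace E] {μ : Measure E} [IsFiniteMeasureOnCompacts μ] (hΩ : IsOpen Ω)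
    (hΩ_bdd : IsBounded Ω) (hu : ContDiffOn ℝ 1 u (closure Ω)) (p : ℝ≥0∞) :
    MemLp u p (μ.restrict Ω) ∧ MemLp (fderiv ℝ u) p (μ.restrict Ω) := by
  have hu_int : ContDiffOn ℝ 1 u Ω := hu.mono subset_closure
  constructor
  · exact memLp_restrict_of_forall_tendsto hΩ_bdd hΩ.measurableSet hu_int.continuousOn
      (fun x hx => ⟨u x, (hu.continuousOn x hx).mono_left (nhdsWithin_mono x subset_closure)⟩) p
  · exact memLp_restrict_of_forall_tendsto hΩ_bdd hΩ.measurableSet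
      (hu_int.continuousOn_fderiv_of_isOpen hΩ le_rfl)
      (fun x hx => exists_tendsto_fderiv_of_contDiffWithinAt_closure hΩ hx (hu x hx)) p

end BoundaryRegularity

section Gluing

variable {X F ι : Type*} [MeasurableSpace X] {μ : Measure X} [NormedAddCommGroup F]

lemma eLpNorm'_restrict_union_le {f : X → F} {q : ℝ} (hq : 1 ≤ q) (s t : Set X) :
    eLpNorm' f q (μ.restrict (s ∪ t)) ≤
      eLpNorm' f q (μ.restrict s) + eLpNorm' f q (μ.restrict t) := by
  have hq0 : 0 < q := by linarith
  simp only [eLpNorm'_eq_lintegral_enorm]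
  grw [lintegral_union_le, ENNReal.rpow_add_le_add_rpow _ _ (by positivity)
    ((div_le_one hq0).2 hq)]

lemma exists_eLpNorm'_restrict_le_of_isCompact [TopologicalSpace X] {K : Set X} (hK : IsCompact K)
    {v : ι → X → F} {q : ι → ℝ} {N : ι → ℝ≥0∞} (hq : ∀ i, 1 ≤ q i)
    (hloc : ∀ x ∈ K, ∃ t ∈ 𝓝 x, ∃ C : ℝ≥0, ∀ i, eLpNorm' (v i) (q i) (μ.restrict t) ≤ C * N i) :
    ∃ C : ℝ≥0, ∀ i, eLpNorm' (v i) (q i) (μ.restrict K) ≤ C * N i := by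
  refine hK.induction_on
    (p := fun s => ∃ C : ℝ≥0, ∀ i, eLpNorm' (v i) (q i) (μ.restrict s) ≤ C * N i) ?_ ?_ ?_ ?_
  · refine ⟨0, fun i => ?_⟩
    rw [Measure.restrict_empty, eLpNorm'_measure_zero_of_pos (by linarith [hq i])]
    exact zero_le
  · rintro s t hst ⟨C, hC⟩
    exact ⟨C, fun i => (eLpNorm'_mono_measure _ (Measure.restrict_mono_set μ hst)
      (by linarith [hq i])).trans (hC i)⟩
  · rintro s t ⟨C₁, hC₁⟩ ⟨C₂, hC₂⟩
    refine ⟨C₁ + C₂, fun i => (eLpNorm'_restrict_union_le (hq i) s t).trans ?_⟩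
    grw [hC₁ i, hC₂ i, ENNReal.coe_add, add_mul]
  · intro x hx
    obtain ⟨t, ht, hC⟩ := hloc x hx
    exact ⟨t, mem_nhdsWithin_of_mem_nhds ht, hC⟩

end Gluing

section SobolevEmbedding

variable {E F : Type*} [NormedAddCommGroup E] [NormedSpace ℝ E] [MeasurableSpace E] [BorelSpace E]
  {μ : Measure E} [NormedAddCommGroup F] [NormedSpace ℝ F] {Ω : Set E}

lemma eLpNorm'_sobolevDensity_le {u : E → F} (hΩ : IsOpen Ω) (hu : ContDiffOn ℝ 1 u Ω) {p : ℝ}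
    (hp : 1 ≤ p) : eLpNorm' (sobolevDensity Ω u) p μ ≤
      eLpNorm' u p (μ.restrict Ω) + eLpNorm' (fderiv ℝ u) p (μ.restrict Ω) := by
  have hp0 : 0 < p := by linarith
  have hmeas := hu.continuousOn.enorm.aemeasurable (μ := μ) hΩ.measurableSet
  have hmeas' := (hu.continuousOn_fderiv_of_isOpen hΩ le_rfl).enorm.aemeasurable (μ := μ)
    hΩ.measurableSet
  calc eLpNorm' (sobolevDensity Ω u) p μ
      = eLpNorm' ((fun x => ‖u x‖ₑ) + fun x => ‖fderiv ℝ u x‖ₑ) p (μ.restrict Ω) := by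
        have : (fun x => sobolevDensity Ω u x ^ p) =
            Ω.indicator fun x => (‖u x‖ₑ + ‖fderiv ℝ u x‖ₑ) ^ p :=
          (indicator_comp_of_zero (g := fun a : ℝ≥0∞ => a ^ p) (ENNReal.zero_rpow_of_pos hp0)).symm
        simp only [eLpNorm'_eq_lintegral_enorm, enorm_eq_self, this,
          lintegral_indicator hΩ.measurableSet, Pi.add_apply]
    _ ≤ eLpNorm' (fun x => ‖u x‖ₑ) p (μ.restrict Ω) +
          eLpNorm' (fun x => ‖fderiv ℝ u x‖ₑ) p (μ.restrict Ω) :=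
        eLpNorm'_add_le hmeas.aestronglyMeasurable hmeas'.aestronglyMeasurable hp
    _ = _ := by rw [eLpNorm'_enorm, eLpNorm'_enorm]

variable [FiniteDimensional ℝ E] [Nontrivial E] [μ.IsAddHaarMeasure] [CompleteSpace F]

theorem exists_eLpNorm'_le_of_hasInteriorCone (hΩ : IsOpen Ω) (hΩ_bdd : IsBounded Ω)
    (hΩ_cone : ∀ x ∈ frontier Ω, HasInteriorCone Ω x) :
    ∃ C : ℝ≥0, ∀ (q : ℝ) (u : E → F), finrank ℝ E ≤ q → ContDiffOn ℝ 1 u Ω →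
      eLpNorm' u q (μ.restrict Ω) ≤ C *
        ENNReal.ofReal (Real.Gamma (q * (1 - 1 / finrank ℝ E) + 1) ^ (1 / q)) *
          eLpNorm' (sobolevDensity Ω u) (finrank ℝ E) μ := by
  have hcone : ∀ x ∈ closure Ω, HasInteriorCone Ω x := fun x hx => by
    by_cases hxΩ : x ∈ Ω
    · exact hasInteriorCone_of_mem_nhds (hΩ.mem_nhds hxΩ)
    · exact hΩ_cone x ⟨hx, by rwa [hΩ.interior_eq]⟩
  have hd : (1 : ℝ) ≤ finrank ℝ E := mod_cast finrank_pos (R := ℝ) (M := E)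
  let I := {i : ℝ × (E → F) // finrank ℝ E ≤ i.1 ∧ ContDiffOn ℝ 1 i.2 Ω}
  obtain ⟨C, hC⟩ := exists_eLpNorm'_restrict_le_of_isCompact (μ := μ.restrict Ω) (ι := I)
    hΩ_bdd.isCompact_closure (v := fun i => i.1.2) (q := fun i => i.1.1)
    (N := fun i =>
      ENNReal.ofReal (Real.Gamma (i.1.1 * (1 - 1 / finrank ℝ E) + 1) ^ (1 / i.1.1)) *
        eLpNorm' (sobolevDensity Ω i.1.2) (finrank ℝ E) μ)
    (fun i => hd.trans i.2.1) fun x hx => by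
      obtain ⟨t, ht, C, hC⟩ := (hcone x hx).exists_eLpNorm'_le (μ := μ) (F := F) hΩ
      refine ⟨t, ht, C, fun i => ?_⟩
      rw [Measure.restrict_restrict' hΩ.measurableSet, ← mul_assoc]
      exact hC i.1.1 i.1.2 i.2.1 i.2.2
  refine ⟨C, fun q u hq hu => ?_⟩
  simpa only [Measure.restrict_restrict' hΩ.measurableSet, inter_eq_self_of_subset_right
    subset_closure, mul_assoc] using hC ⟨(q, u), hq, hu⟩

theorem stmt_19_general (hΩ : IsOpen Ω) (hΩ_bdd : IsBounded Ω)
    (hΩ_cone : ∀ x ∈ frontier Ω, HasInteriorCone Ω x) :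
    ∃ C : ℝ, 0 < C ∧ ∀ q : ℝ, finrank ℝ E ≤ q → ∀ u : E → F, ContDiffOn ℝ 1 u Ω →
      MemLp u (finrank ℝ E) (μ.restrict Ω) → MemLp (fderiv ℝ u) (finrank ℝ E) (μ.restrict Ω) →
        MemLp u (ENNReal.ofReal q) (μ.restrict Ω) ∧
          (∫ x in Ω, ‖u x‖ ^ q ∂μ) ^ (1 / q) ≤
            C * Real.Gamma (q * (1 - 1 / finrank ℝ E) + 1) ^ (1 / q) *
              ((∫ x in Ω, ‖u x‖ ^ finrank ℝ E ∂μ) +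
                ∫ x in Ω, ‖fderiv ℝ u x‖ ^ finrank ℝ E ∂μ) ^ (1 / finrank ℝ E : ℝ) := by
  obtain ⟨C, hC⟩ := exists_eLpNorm'_le_of_hasInteriorCone (μ := μ) (F := F) hΩ hΩ_bdd hΩ_cone
  refine ⟨2 * C + 1, by positivity, fun q hq u hu hu_mem hDu_mem => ?_⟩
  have hd : 1 ≤ finrank ℝ E := finrank_pos
  have hq0 : 0 < q := by linarith [(Nat.one_le_cast (α := ℝ)).2 hd]
  set G := Real.Gamma (q * (1 - 1 / finrank ℝ E) + 1) ^ (1 / q)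
  set S := ((∫ x in Ω, ‖u x‖ ^ finrank ℝ E ∂μ) +
    ∫ x in Ω, ‖fderiv ℝ u x‖ ^ finrank ℝ E ∂μ) ^ (1 / finrank ℝ E : ℝ)
  have hG : 0 ≤ G := by
    have : (1 : ℝ) / finrank ℝ E ≤ 1 := div_le_one_of_le₀ (mod_cast hd) (by positivity)
    have : 0 ≤ q * (1 - 1 / finrank ℝ E) := mul_nonneg hq0.le (by linarith)
    positivity
  have hbound : eLpNorm u (ENNReal.ofReal q) (μ.restrict Ω) ≤ ENNReal.ofReal (C * G * (2 * S)) := by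
    rw [eLpNorm_ofReal_eq_eLpNorm' hq0, ENNReal.ofReal_mul (by positivity),
      ENNReal.ofReal_mul C.coe_nonneg, ENNReal.ofReal_coe_nnreal]
    refine (hC q u hq hu).trans (mul_le_mul_right ?_ _)
    exact (eLpNorm'_sobolevDensity_le hΩ hu (mod_cast hd)).trans
      (eLpNorm'_add_eLpNorm'_le_ofReal (by lia) hu_mem hDu_mem)
  have hu_memq : MemLp u (ENNReal.ofReal q) (μ.restrict Ω) :=
    ⟨hu_mem.1, hbound.trans_lt ENNReal.ofReal_lt_top⟩
  refine ⟨hu_memq, ?_⟩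
  rw [eLpNorm_ofReal_eq_eLpNorm' hq0, eLpNorm'_eq_ofReal_integral_rpow hq0 hu_memq,
    ENNReal.ofReal_le_ofReal_iff (by positivity)] at hbound
  have : 0 ≤ G * S := by positivity
  linarith

end SobolevEmbedding

/-- For a bounded open `Ω ⊆ ℝ²` with `C²` boundary there is a constant
`C > 0` depending only on `Ω` such that for every integer `k ≥ 2` and every `u` of class
`C¹` on `closure Ω`,
`(∫_Ω |u|^k)^{1/k} ≤ C (Γ(k/2 + 1))^{1/k} (∫_Ω u² + ∫_Ω |∇u|²)^{1/2}`. -/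
theorem stmt_19 (Ω : Set (EuclideanSpace ℝ (Fin 2))) (hΩ_open : IsOpen Ω)
    (hΩ_bdd : IsBounded Ω)
    (hΩ_bdy : ∀ x ∈ frontier Ω, ∃ U g, IsC2LocalDefining Ω x U g) :
    ∃ C : ℝ, 0 < C ∧
      ∀ k : ℕ, 2 ≤ k →
        ∀ u : EuclideanSpace ℝ (Fin 2) → ℝ, ContDiffOn ℝ 1 u (closure Ω) →
          (∫ x in Ω, |u x| ^ k) ^ ((1 : ℝ) / k) ≤
            C * Real.Gamma ((k : ℝ) / 2 + 1) ^ ((1 : ℝ) / k) *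
              Real.sqrt ((∫ x in Ω, u x ^ 2) + ∫ x in Ω, ‖gradient u x‖ ^ 2) := by
  obtain ⟨C, hC, hbound⟩ := stmt_19_general (μ := volume) (F := ℝ) hΩ_open hΩ_bdd fun x hx =>
    have ⟨_, _, hg⟩ := hΩ_bdy x hx
    hg.hasInteriorCone
  refine ⟨C, hC, fun k hk u hu => ?_⟩
  obtain ⟨hu_mem, hDu_mem⟩ :=
    memLp_and_memLp_fderiv_of_contDiffOn_closure (μ := volume) hΩ_open hΩ_bdd hu
      (finrank ℝ (EuclideanSpace ℝ (Fin 2)))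
  have h := (hbound k (by simpa using hk) u (hu.mono subset_closure) hu_mem hDu_mem).2
  have hk_exp : (k : ℝ) * (1 - 2⁻¹) + 1 = k / 2 + 1 := by ring
  simpa [gradient, Real.sqrt_eq_rpow, hk_exp] using h
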